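/- arXiv:2303.08368 — 3 statements merged into one kernel-verified Lean document; each statement's English description precedes it below -/
import Mathlib

section
/- (Theorem 2, part 1) The vector u_1 − exp(j·ε_tx,K)·u_3 belongs to the non-signal subspace of the noiseless auto-correlation matrix: R · (u_1 − exp(j·ε_tx,K)·u_3) = 0. -/
open scoped BigOperators

/-- Steering vector `a(ε) ∈ ℂ^{n+1}` with entries `exp(j·i·ε)`, `i = 0,…,n`. -/
noncomputable def steer (n : ℕ) (ε : ℝ) : Fin (n + 1) → ℂ :=
  fun i => Complex.exp (Complex.I * ((i : ℕ) : ℂ) * (ε : ℂ))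

/-- The vector `E(η_1,…,η_m) ∈ ℂ^{m+1}` defined recursively by
`E(η_1) = (1, −exp(j·η_1))` and
`E(η_1,…,η_p) = (E(η_1,…,η_{p−1}), 0) − exp(j·η_p)·(0, E(η_1,…,η_{p−1}))`
(with base case `E() = (1)`, which reproduces the stated base case at `m = 1`). -/
noncomputable def Evec : (m : ℕ) → (Fin m → ℝ) → (Fin (m + 1) → ℂ)
  | 0, _ => fun _ => 1
  | m + 1, η => fun i =>
      Fin.snoc (α := fun _ => ℂ) (Evec m fun j => η j.castSucc) 0 i -
        Complex.exp (Complex.I * (η (Fin.last m) : ℂ)) *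
          Fin.cons (α := fun _ => ℂ) 0 (Evec m fun j => η j.castSucc) i

/-- The cyclic down-shift matrix on `ℂ^{n+1}`: `(Lv)_0 = v_n`, `(Lv)_i = v_{i−1}` for `i ≥ 1`. -/
def Lmat (n : ℕ) : Matrix (Fin (n + 1)) (Fin (n + 1)) ℂ :=
  Matrix.of fun i l => if l = i - 1 then 1 else 0

/-- Kronecker product of vectors: `(v ⊗ w)_{(i,l)} = v_i · w_l`. -/
def kron {a b : Type*} (v : a → ℂ) (w : b → ℂ) : a × b → ℂ :=
  fun p => v p.1 * w p.2

/-- `x^† y = Σ_i conj(x_i) · y_i`. -/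
noncomputable def ip {n : Type*} [Fintype n] (x y : n → ℂ) : ℂ :=
  ∑ i, (starRingEnd ℂ) (x i) * y i

/-- `x^† M y = Σ_{i,l} conj(x_i) · M_{i,l} · y_l`. -/
noncomputable def qf {n : Type*} [Fintype n] (x : n → ℂ) (M : Matrix n n ℂ) (y : n → ℂ) : ℂ :=
  ∑ i, ∑ l, (starRingEnd ℂ) (x i) * M i l * y l

/-- `E(η_1,…,η_Kp) ∈ ℂ^{Kp+1}` padded with a trailing zero, giving a vector in `ℂ^{Kp+2}`. -/
noncomputable def Epad (Kp : ℕ) (η : Fin Kp → ℝ) : Fin (Kp + 2) → ℂ :=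
  Fin.snoc (Evec Kp η) 0

/-- `u_0 = Ẽ_tx ⊗ Ẽ_rx`. -/
noncomputable def u0 (Kp : ℕ) (ηt ηr : Fin Kp → ℝ) : Fin (Kp + 2) × Fin (Kp + 2) → ℂ :=
  kron (Epad Kp ηt) (Epad Kp ηr)

/-- `u_1 = Ẽ_tx ⊗ (L·Ẽ_rx)`. -/
noncomputable def u1 (Kp : ℕ) (ηt ηr : Fin Kp → ℝ) : Fin (Kp + 2) × Fin (Kp + 2) → ℂ :=
  kron (Epad Kp ηt) ((Lmat (Kp + 1)).mulVec (Epad Kp ηr))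

/-- `u_2 = (L·Ẽ_tx) ⊗ Ẽ_rx`. -/
noncomputable def u2 (Kp : ℕ) (ηt ηr : Fin Kp → ℝ) : Fin (Kp + 2) × Fin (Kp + 2) → ℂ :=
  kron ((Lmat (Kp + 1)).mulVec (Epad Kp ηt)) (Epad Kp ηr)

/-- `u_3 = (L·Ẽ_tx) ⊗ (L·Ẽ_rx)`. -/
noncomputable def u3 (Kp : ℕ) (ηt ηr : Fin Kp → ℝ) : Fin (Kp + 2) × Fin (Kp + 2) → ℂ :=
  kron ((Lmat (Kp + 1)).mulVec (Epad Kp ηt)) ((Lmat (Kp + 1)).mulVec (Epad Kp ηr))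

/-- The noiseless auto-correlation matrix `R = Σ_{k=1}^K σ_k² A_k A_k^†`, where
`A_k = a(ε_tx,k) ⊗ a(ε_rx,k)` and `σsq k` is the power `σ_k²`. -/
noncomputable def Rmat (K : ℕ) (εtx εrx σsq : Fin K → ℝ) :
    Matrix (Fin (K + 1) × Fin (K + 1)) (Fin (K + 1) × Fin (K + 1)) ℂ :=
  Matrix.of fun p q => ∑ k, (σsq k : ℂ) *
    kron (steer K (εtx k)) (steer K (εrx k)) p *
    (starRingEnd ℂ) (kron (steer K (εtx k)) (steer K (εrx k)) q)

/-- The rank-one matrix `R_ε = a(ε) a(ε)^† ∈ ℂ^{(Kp+2)×(Kp+2)}`. -/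
noncomputable def Rsingle (Kp : ℕ) (ε : ℝ) : Matrix (Fin (Kp + 2)) (Fin (Kp + 2)) ℂ :=
  Matrix.of fun i l => steer (Kp + 1) ε i * (starRingEnd ℂ) (steer (Kp + 1) ε l)

/-- The iDEA cost `Q_tx(φ) = (u_1 − exp(j·φ)·u_3)^† R (u_1 − exp(j·φ)·u_3)`. -/
noncomputable def Qcost (Kp : ℕ) (εtx εrx σsq : Fin (Kp + 1) → ℝ)
    (ηt ηr : Fin Kp → ℝ) (φ : ℝ) : ℂ :=
  qf (u1 Kp ηt ηr - Complex.exp (Complex.I * (φ : ℂ)) • u3 Kp ηt ηr)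
    (Rmat (Kp + 1) εtx εrx σsq)
    (u1 Kp ηt ηr - Complex.exp (Complex.I * (φ : ℂ)) • u3 Kp ηt ηr)

/-- The closed-form value `4^{2K−1} · Σ_k σ_k² sin²((ε_tx,k − φ)/2) ∏_m sin²((ε_tx,k − ε̂_tx,m)/2)
∏_n sin²((ε_rx,k − ε̂_rx,n)/2)` (here `K = Kp + 1`, so `2K − 1 = 2·Kp + 1`). -/
noncomputable def Ssum (Kp : ℕ) (εtx εrx σsq : Fin (Kp + 1) → ℝ)
    (ηt ηr : Fin Kp → ℝ) (φ : ℝ) : ℝ :=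
  (4 : ℝ) ^ (2 * Kp + 1) * ∑ k, σsq k * Real.sin ((εtx k - φ) / 2) ^ 2 *
    (∏ m, Real.sin ((εtx k - ηt m) / 2) ^ 2) *
    (∏ n, Real.sin ((εrx k - ηr n) / 2) ^ 2)

/-- The `k = K` term of `Ssum`, i.e. the lower bound
`4^{2K−1} · σ_K² sin²((ε_tx,K − φ)/2) ∏_m sin²((ε_tx,K − ε̂_tx,m)/2) ∏_n sin²((ε_rx,K − ε̂_rx,n)/2)`. -/
noncomputable def Slb (Kp : ℕ) (εtx εrx σsq : Fin (Kp + 1) → ℝ)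
    (ηt ηr : Fin Kp → ℝ) (φ : ℝ) : ℝ :=
  (4 : ℝ) ^ (2 * Kp + 1) * σsq (Fin.last Kp) *
    Real.sin ((εtx (Fin.last Kp) - φ) / 2) ^ 2 *
    (∏ m, Real.sin ((εtx (Fin.last Kp) - ηt m) / 2) ^ 2) *
    (∏ n, Real.sin ((εrx (Fin.last Kp) - ηr n) / 2) ^ 2)

theorem aux_Evec_sum (z : ℂ) : ∀ (m : ℕ) (η : Fin m → ℝ),
    ∑ i : Fin (m + 1), z ^ (i : ℕ) * Evec m η i
      = ∏ k, (1 - z * Complex.exp (Complex.I * (η k : ℂ)))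
  | 0, η => by simp [Evec]
  | m + 1, η => by
    have ih := aux_Evec_sum z m (fun j => η j.castSucc)
    rw [Fin.prod_univ_castSucc, ← ih]
    simp only [Evec, mul_sub, Finset.sum_sub_distrib]
    rw [Fin.sum_univ_castSucc, Fin.sum_univ_succ (n := m + 1)]
    simp only [Fin.snoc_castSucc, Fin.snoc_last, Fin.cons_zero, Fin.cons_succ, Fin.val_castSucc,
      Fin.val_succ, mul_zero, add_zero, zero_add, mul_one, Finset.sum_mul]
    congr 1
    refine Finset.sum_congr rfl fun i _ => ?_
    ring

theorem aux_conj_steer (n : ℕ) (ε : ℝ) (i : Fin (n + 1)) :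
    (starRingEnd ℂ) (steer n ε i) = Complex.exp (-(Complex.I * (ε : ℂ))) ^ (i : ℕ) := by
  rw [steer, ← Complex.exp_conj, ← Complex.exp_nat_mul]
  congr 1
  simp
  ring

theorem aux_steer_Evec (m : ℕ) (η : Fin m → ℝ) (k : Fin m) :
    ∑ i : Fin (m + 1), (starRingEnd ℂ) (steer m (η k) i) * Evec m η i = 0 := by
  simp only [aux_conj_steer]
  rw [aux_Evec_sum]
  refine Finset.prod_eq_zero (Finset.mem_univ k) ?_
  rw [← Complex.exp_add]
  simp

theorem aux_L_Epad (Kp : ℕ) (η : Fin Kp → ℝ) :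
    (Lmat (Kp + 1)).mulVec (Epad Kp η) = Fin.cons (α := fun _ => ℂ) 0 (Evec Kp η) := by
  funext i
  have h : (Lmat (Kp + 1)).mulVec (Epad Kp η) i = Epad Kp η (i - 1) := by
    simp [Matrix.mulVec, dotProduct, Lmat]
  rw [h]
  refine Fin.cases ?_ (fun j => ?_) i
  · have : (0 : Fin (Kp + 2)) - 1 = Fin.last (Kp + 1) := by
      rw [sub_eq_iff_eq_add, Fin.last_add_one]
    rw [this]
    simp [Epad]
  · have : j.succ - 1 = j.castSucc := by
      rw [sub_eq_iff_eq_add]; simp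
    rw [this]
    simp [Epad]

theorem aux_u (Kp : ℕ) (η : Fin (Kp + 1) → ℝ) (ηr : Fin Kp → ℝ) :
    u1 Kp (fun i => η i.castSucc) ηr
      - Complex.exp (Complex.I * (η (Fin.last Kp) : ℂ)) • u3 Kp (fun i => η i.castSucc) ηr
      = kron (Evec (Kp + 1) η) ((Lmat (Kp + 1)).mulVec (Epad Kp ηr)) := by
  funext p
  simp only [u1, u3, kron, Pi.sub_apply, Pi.smul_apply, smul_eq_mul, aux_L_Epad]
  simp only [Evec, Epad]
  ring

/-- Theorem 2, part 1: R · (u_1 − exp(j·ε_tx,K)·u_3) = 0. -/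
theorem statement6 (Kp : ℕ) (hKp : 1 ≤ Kp) (εtx εrx : Fin (Kp + 1) → ℝ)
    (σsq : Fin (Kp + 1) → ℝ) (hσ : ∀ k, 0 < σsq k) :
    (Rmat (Kp + 1) εtx εrx σsq).mulVec
      (u1 Kp (fun i => εtx i.castSucc) (fun i => εrx i.castSucc) - Complex.exp (Complex.I * (εtx (Fin.last Kp) : ℂ)) • u3 Kp (fun i => εtx i.castSucc) (fun i => εrx i.castSucc)) = 0 := by
  rw [aux_u]
  funext p
  simp only [Matrix.mulVec, dotProduct, Rmat, Matrix.of_apply, Finset.sum_mul, Pi.zero_apply]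
  rw [Finset.sum_comm]
  refine Finset.sum_eq_zero fun k _ => ?_
  generalize (Lmat (Kp + 1)).mulVec _ = w
  have h := aux_steer_Evec (Kp + 1) εtx k
  rw [Fintype.sum_prod_type_right]
  refine Finset.sum_eq_zero fun y _ => ?_
  rw [← mul_zero ((σsq k : ℂ) * kron (steer (Kp + 1) (εtx k)) (steer (Kp + 1) (εrx k)) p *
    ((starRingEnd ℂ) (steer (Kp + 1) (εrx k) y) * w y)), ← h, Finset.mul_sum]
  refine Finset.sum_congr rfl fun x _ => ?_
  simp only [kron, map_mul]
  ring
end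

section
/- (Theorem 2, part 3) The vector u_0 − exp(j·ε_tx,K)·exp(j·ε_rx,K)·u_3 belongs to the non-signal subspace of the noiseless auto-correlation matrix: R · (u_0 − exp(j·ε_tx,K)·exp(j·ε_rx,K)·u_3) = 0. -/
open scoped BigOperators

lemma h8_snoc (n : ℕ) (z : ℂ) (v : Fin (n + 1) → ℂ) :
    ∑ i : Fin (n + 2), z ^ (i : ℕ) * Fin.snoc (α := fun _ => ℂ) v 0 i
      = ∑ i : Fin (n + 1), z ^ (i : ℕ) * v i := by
  rw [Fin.sum_univ_castSucc]; simp

lemma h8_cons (n : ℕ) (z : ℂ) (v : Fin (n + 1) → ℂ) :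
    ∑ i : Fin (n + 2), z ^ (i : ℕ) * Fin.cons (α := fun _ => ℂ) 0 v i
      = z * ∑ i : Fin (n + 1), z ^ (i : ℕ) * v i := by
  rw [Fin.sum_univ_succ, Finset.mul_sum]
  simp only [Fin.cons_zero, Fin.cons_succ, mul_zero, zero_add, Fin.val_succ]
  exact Finset.sum_congr rfl fun i _ => by ring

lemma h8_E (m : ℕ) (z : ℂ) (η : Fin m → ℝ) :
    ∑ i : Fin (m + 1), z ^ (i : ℕ) * Evec m η i = ∏ k, (1 - Complex.exp (Complex.I * (η k : ℂ)) * z) := by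
  induction m with
  | zero => simp [Evec]
  | succ m ih =>
    rw [Fin.prod_univ_castSucc, ← ih (fun j => η j.castSucc)]
    simp only [Evec, mul_sub, Finset.sum_sub_distrib]
    rw [h8_snoc]
    have h := h8_cons m z (Evec m fun j => η j.castSucc)
    simp only [mul_left_comm _ (Complex.exp _) _, ← Finset.mul_sum]
    rw [h]; ring

lemma h8_L (n : ℕ) (v : Fin (n + 1) → ℂ) :
    (Lmat (n + 1)).mulVec (Fin.snoc (α := fun _ => ℂ) v 0) = Fin.cons (α := fun _ => ℂ) 0 v := by
  ext i
  simp only [Matrix.mulVec, dotProduct, Lmat, Matrix.of_apply, ite_mul, one_mul, zero_mul,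
    Finset.sum_ite_eq', Finset.sum_ite_eq, Finset.mem_univ, if_true]
  refine Fin.cases ?_ (fun j => ?_) i
  · have : (0 - 1 : Fin (n + 2)) = Fin.last (n + 1) := by
      rw [sub_eq_iff_eq_add]; simp
    rw [this]; simp
  · have : (j.succ - 1 : Fin (n + 2)) = j.castSucc := by
      rw [sub_eq_iff_eq_add]; simp
    rw [this]; simp

lemma h8_steer (n : ℕ) (ε : ℝ) (i : Fin (n + 1)) :
    (starRingEnd ℂ) (steer n ε i) = Complex.exp (-(Complex.I * ε)) ^ (i : ℕ) := by
  rw [steer, ← Complex.exp_conj, ← Complex.exp_nat_mul]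
  congr 1
  simp; ring

lemma h8_kron {a b : Type*} [Fintype a] [Fintype b] (f v : a → ℂ) (g w : b → ℂ) :
    ∑ p : a × b, (f p.1 * g p.2) * kron v w p = (∑ i, f i * v i) * ∑ l, g l * w l := by
  rw [Fintype.sum_prod_type, Finset.sum_mul_sum]
  exact Finset.sum_congr rfl fun i _ => Finset.sum_congr rfl fun j _ => by simp only [kron]; ring

/-- Theorem 2, part 3: R · (u_0 − exp(j·ε_tx,K)·exp(j·ε_rx,K)·u_3) = 0. -/
theorem statement8 (Kp : ℕ) (hKp : 1 ≤ Kp) (εtx εrx : Fin (Kp + 1) → ℝ)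
    (σsq : Fin (Kp + 1) → ℝ) (hσ : ∀ k, 0 < σsq k) :
    (Rmat (Kp + 1) εtx εrx σsq).mulVec
      (u0 Kp (fun i => εtx i.castSucc) (fun i => εrx i.castSucc) - (Complex.exp (Complex.I * (εtx (Fin.last Kp) : ℂ)) * Complex.exp (Complex.I * (εrx (Fin.last Kp) : ℂ))) • u3 Kp (fun i => εtx i.castSucc) (fun i => εrx i.castSucc)) = 0 := by
  set et := Complex.exp (Complex.I * (εtx (Fin.last Kp) : ℂ)) with het
  set er := Complex.exp (Complex.I * (εrx (Fin.last Kp) : ℂ)) with her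
  have key : ∀ k, ∑ q, (starRingEnd ℂ) (kron (steer (Kp + 1) (εtx k)) (steer (Kp + 1) (εrx k)) q) *
      (u0 Kp (fun i => εtx i.castSucc) (fun i => εrx i.castSucc) -
        (et * er) • u3 Kp (fun i => εtx i.castSucc) (fun i => εrx i.castSucc)) q = 0 := by
    intro k
    have hk : ∀ q : Fin (Kp + 2) × Fin (Kp + 2),
        (starRingEnd ℂ) (kron (steer (Kp + 1) (εtx k)) (steer (Kp + 1) (εrx k)) q) =
        Complex.exp (-(Complex.I * εtx k)) ^ (q.1 : ℕ) *
          Complex.exp (-(Complex.I * εrx k)) ^ (q.2 : ℕ) := by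
      intro q
      rw [kron, map_mul, h8_steer, h8_steer]
    simp only [hk, Pi.sub_apply, Pi.smul_apply, smul_eq_mul, mul_sub, Finset.sum_sub_distrib,
      mul_left_comm _ (et * er) _, ← Finset.mul_sum]
    simp only [u0, u3, Epad, h8_L]
    rw [h8_kron (fun i : Fin (Kp + 2) => Complex.exp (-(Complex.I * εtx k)) ^ (i : ℕ)) _
        (fun i : Fin (Kp + 2) => Complex.exp (-(Complex.I * εrx k)) ^ (i : ℕ)),
      h8_kron (fun i : Fin (Kp + 2) => Complex.exp (-(Complex.I * εtx k)) ^ (i : ℕ)) _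
        (fun i : Fin (Kp + 2) => Complex.exp (-(Complex.I * εrx k)) ^ (i : ℕ)),
      h8_snoc, h8_snoc, h8_cons, h8_cons, h8_E, h8_E]
    refine Fin.lastCases ?_ (fun j => ?_) k
    · have h1 : et * Complex.exp (-(Complex.I * εtx (Fin.last Kp))) = 1 := by
        rw [het, ← Complex.exp_add]; simp
      have h2 : er * Complex.exp (-(Complex.I * εrx (Fin.last Kp))) = 1 := by
        rw [her, ← Complex.exp_add]; simp
      generalize (Finset.prod (Finset.univ : Finset (Fin Kp)) _ : ℂ) = P
      generalize (Finset.prod (Finset.univ : Finset (Fin Kp)) _ : ℂ) = Q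
      linear_combination (-P * Q * (er * Complex.exp (-(Complex.I * εrx (Fin.last Kp))))) * h1 - P * Q * h2
    · have h0 : ∏ i : Fin Kp, (1 - Complex.exp (Complex.I * (εtx i.castSucc : ℂ)) *
          Complex.exp (-(Complex.I * εtx j.castSucc))) = 0 := by
        apply Finset.prod_eq_zero (Finset.mem_univ j)
        rw [← Complex.exp_add]; simp
      rw [h0]; ring
  ext p
  simp only [Matrix.mulVec, dotProduct, Rmat, Matrix.of_apply, Finset.sum_mul, Pi.zero_apply]
  rw [Finset.sum_comm]
  refine Finset.sum_eq_zero fun k _ => ?_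
  simp only [mul_assoc, ← Finset.mul_sum]
  rw [key k]; simp
end

section
/- (Corollary 1, equation (17)) If u_2^† R u_3 ≠ 0, then exp(j·ε_rx,K) = (u_2^† R u_2) / (u_2^† R u_3). -/
open scoped BigOperators

theorem ip_steer_snoc (m : ℕ) (ε : ℝ) (v : Fin (m + 1) → ℂ) :
    ip (steer (m + 1) ε) (Fin.snoc (α := fun _ => ℂ) v 0) = ip (steer m ε) v := by
  unfold ip
  rw [Fin.sum_univ_castSucc]
  simp [steer]

theorem ip_steer_cons (m : ℕ) (ε : ℝ) (v : Fin (m + 1) → ℂ) :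
    ip (steer (m + 1) ε) (Fin.cons (α := fun _ => ℂ) 0 v) =
      Complex.exp (-(Complex.I * (ε : ℂ))) * ip (steer m ε) v := by
  unfold ip
  rw [Fin.sum_univ_succ]
  simp only [Fin.cons_zero, mul_zero, zero_add, Fin.cons_succ, Finset.mul_sum]
  refine Finset.sum_congr rfl fun i _ => ?_
  rw [← mul_assoc]
  congr 1
  simp only [steer, ← Complex.exp_conj, ← Complex.exp_add]
  congr 1
  simp
  ring

theorem Lmat_mulVec_snoc (m : ℕ) (v : Fin (m + 1) → ℂ) :
    (Lmat (m + 1)).mulVec (Fin.snoc (α := fun _ => ℂ) v 0) = Fin.cons (α := fun _ => ℂ) 0 v := by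
  funext i
  have h : (Lmat (m + 1)).mulVec (Fin.snoc (α := fun _ => ℂ) v 0) i =
      Fin.snoc (α := fun _ => ℂ) v 0 (i - 1) := by
    simp [Matrix.mulVec, dotProduct, Lmat]
  rw [h]
  refine Fin.cases ?_ (fun i => ?_) i
  · have : (0 : Fin (m + 2)) - 1 = Fin.last (m + 1) := by
      rw [sub_eq_iff_eq_add]; simp
    rw [this]; simp
  · have : i.succ - 1 = i.castSucc := by
      rw [sub_eq_iff_eq_add]; simp
    rw [this]; simp

theorem ip_steer_Evec_succ (m : ℕ) (ε : ℝ) (η : Fin (m + 1) → ℝ) :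
    ip (steer (m + 1) ε) (Evec (m + 1) η) =
      (1 - Complex.exp (Complex.I * (η (Fin.last m) : ℂ)) * Complex.exp (-(Complex.I * (ε : ℂ)))) *
        ip (steer m ε) (Evec m fun j => η j.castSucc) := by
  have h : ip (steer (m + 1) ε) (Evec (m + 1) η) =
      ip (steer (m + 1) ε) (Fin.snoc (α := fun _ => ℂ) (Evec m fun j => η j.castSucc) 0) -
      Complex.exp (Complex.I * (η (Fin.last m) : ℂ)) *
      ip (steer (m + 1) ε) (Fin.cons (α := fun _ => ℂ) 0 (Evec m fun j => η j.castSucc)) := by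
    simp only [ip, Finset.mul_sum, ← Finset.sum_sub_distrib]
    refine Finset.sum_congr rfl fun i _ => ?_
    rw [Evec]
    ring
  rw [h, ip_steer_snoc, ip_steer_cons]
  ring

theorem ip_steer_Evec_zero (m : ℕ) (η : Fin m → ℝ) (k : Fin m) :
    ip (steer m (η k)) (Evec m η) = 0 := by
  induction m with
  | zero => exact k.elim0
  | succ m ih =>
    rw [ip_steer_Evec_succ]
    refine Fin.lastCases ?_ (fun i => ?_) k
    · rw [← Complex.exp_add]; simp
    · rw [ih (fun j => η j.castSucc) i, mul_zero]

theorem ip_kron {a b : Type*} [Fintype a] [Fintype b] (v x : a → ℂ) (w y : b → ℂ) :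
    ip (kron v w) (kron x y) = ip v x * ip w y := by
  simp only [ip, kron, Fintype.sum_prod_type, Finset.sum_mul_sum, map_mul]
  refine Finset.sum_congr rfl fun i _ => Finset.sum_congr rfl fun j _ => ?_
  ring

theorem qf_Rmat (K : ℕ) (εtx εrx σsq : Fin K → ℝ) (x y : Fin (K + 1) × Fin (K + 1) → ℂ) :
    qf x (Rmat K εtx εrx σsq) y = ∑ k, (σsq k : ℂ) *
      ip x (kron (steer K (εtx k)) (steer K (εrx k))) *
      ip (kron (steer K (εtx k)) (steer K (εrx k))) y := by
  have h : ∀ k, (σsq k : ℂ) *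
      ip x (kron (steer K (εtx k)) (steer K (εrx k))) *
      ip (kron (steer K (εtx k)) (steer K (εrx k))) y =
      ∑ p, ∑ q, (starRingEnd ℂ) (x p) * ((σsq k : ℂ) *
        kron (steer K (εtx k)) (steer K (εrx k)) p *
        (starRingEnd ℂ) (kron (steer K (εtx k)) (steer K (εrx k)) q)) * y q := by
    intro k
    rw [mul_assoc, ip, ip, Finset.sum_mul_sum, Finset.mul_sum]
    refine Finset.sum_congr rfl fun i _ => ?_
    rw [Finset.mul_sum]
    refine Finset.sum_congr rfl fun j _ => ?_
    ring
  simp only [h]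
  rw [Finset.sum_comm]
  unfold qf
  refine Finset.sum_congr rfl fun p _ => ?_
  rw [Finset.sum_comm]
  refine Finset.sum_congr rfl fun q _ => ?_
  simp only [Rmat, Matrix.of_apply, Finset.mul_sum, Finset.sum_mul]

/-- Corollary 1, eq. (17): if u_2^† R u_3 ≠ 0, then
exp(j·ε_rx,K) = (u_2^† R u_2) / (u_2^† R u_3). -/
theorem statement10 (Kp : ℕ) (hKp : 1 ≤ Kp) (εtx εrx : Fin (Kp + 1) → ℝ)
    (σsq : Fin (Kp + 1) → ℝ) (hσ : ∀ k, 0 < σsq k)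
    (hden : qf (u2 Kp (fun i => εtx i.castSucc) (fun i => εrx i.castSucc)) (Rmat (Kp + 1) εtx εrx σsq)
        (u3 Kp (fun i => εtx i.castSucc) (fun i => εrx i.castSucc)) ≠ 0) :
    Complex.exp (Complex.I * (εrx (Fin.last Kp) : ℂ)) =
      qf (u2 Kp (fun i => εtx i.castSucc) (fun i => εrx i.castSucc)) (Rmat (Kp + 1) εtx εrx σsq)
          (u2 Kp (fun i => εtx i.castSucc) (fun i => εrx i.castSucc)) /
        qf (u2 Kp (fun i => εtx i.castSucc) (fun i => εrx i.castSucc)) (Rmat (Kp + 1) εtx εrx σsq)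
          (u3 Kp (fun i => εtx i.castSucc) (fun i => εrx i.castSucc)) := by
  rw [eq_div_iff hden, qf_Rmat, qf_Rmat, Finset.mul_sum]
  refine Finset.sum_congr rfl fun k _ => ?_
  simp only [u2, u3, ip_kron, Epad, Lmat_mulVec_snoc, ip_steer_cons, ip_steer_snoc]
  refine Fin.lastCases ?_ (fun i => ?_) k
  · have h : Complex.exp (Complex.I * (εrx (Fin.last Kp) : ℂ)) *
        Complex.exp (-(Complex.I * (εrx (Fin.last Kp) : ℂ))) = 1 := by
      rw [← Complex.exp_add]; simp
    generalize Complex.exp (Complex.I * (εrx (Fin.last Kp) : ℂ)) = e at *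
    generalize Complex.exp (-(Complex.I * (εrx (Fin.last Kp) : ℂ))) = f at *
    grind
  · have h := ip_steer_Evec_zero Kp (fun i => εrx i.castSucc) i
    rw [h]
    simp
end
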